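/- Let F = ℝ or ℂ, let A ∈ F^{I×R} and C ∈ F^{K×R} have nonzero columns, let T = [A,A,C]_R, and set m_A := R − rank(A) + 2. Assume: (i) max(min(k_A, k_C − 1), min(k_A − 1, k_C)) + k_A ≥ R + 1; (ii) condition (U_{m_A}) holds for the pair (A,C). Then the rank of T equals R and the SFS-CPD of T is unique. -/

import Mathlib

/-!
Let `T = [A,A,C]_R = [A',B',C']_{R'}` with `R' ≤ R`. Contracting the first mode with a functional
`x` gives `A Diag(x(a_r)) Cᵀ = B' Diag(x(a'_s)) C'ᵀ`, whose rank is at most `ω(x(a'_s))`. Condition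
`(U_m)` for `m = m_A` implies `(U_k)` for all `1 ≤ k ≤ m` (`CondU.le`), so
`ω(x(a_r)) ≤ ω(x(a'_s))` whenever the right-hand side is at most `m_A - 1`.

This is the hypothesis of Kruskal's permutation lemma (`permutation_lemma`): every hyperplane with
at least `rank A' - 1` columns of `A'` has at least `R - R'` more columns of `A` than of `A'`. By
downward induction, summing over the covers of a flat, the inequality passes to all subspaces
spanned by columns of `A'` (`countIn_flat_le`). On the lines spanned by the columns of `A'`, and
since no two columns of `A` are proportional, it gives `R' = R` and shows that `A'` is `A` up to
permutation and scaling of the columns. In particular `T` has rank `R`.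

For an SFS decomposition both equal factors are thereby known, and the remaining factor is
determined because `A ⊙ A` has full column rank when `2 k_A ≥ R + 1`
(`khatriRao_self_injective`), which is what assumption (i) is used for, along with `k_A ≥ 2`.
-/

open MeasureTheory

noncomputable section

/-- The tensor `[A,B,C]_R` with entries `t_{ijk} = Σ_r A i r * B j r * C k r`. -/
def cpdSum {F : Type*} [CommRing F] {I J K R : ℕ}
    (A : Fin I → Fin R → F) (B : Fin J → Fin R → F) (C : Fin K → Fin R → F) :
    Fin I → Fin J → Fin K → F :=
  fun i j k => ∑ r : Fin R, A i r * B j r * C k r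

/-- `T` is the sum of the `R` rank-1 terms `a_r ∘ b_r ∘ c_r` with all vectors nonzero. -/
def IsPD {F : Type*} [CommRing F] {I J K : ℕ} (T : Fin I → Fin J → Fin K → F) (R : ℕ)
    (a : Fin R → Fin I → F) (b : Fin R → Fin J → F) (c : Fin R → Fin K → F) : Prop :=
  (∀ r, a r ≠ 0) ∧ (∀ r, b r ≠ 0) ∧ (∀ r, c r ≠ 0) ∧
    ∀ i j k, T i j k = ∑ r : Fin R, a r i * b r j * c r k

/-- The rank of a third-order tensor: the minimal number of rank-1 terms. -/
def tensorRank {F : Type*} [CommRing F] {I J K : ℕ} (T : Fin I → Fin J → Fin K → F) : ℕ :=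
  sInf {R | ∃ a b c, IsPD T R a b c}

/-- The CPD of `T` is unique: any two decompositions of `T` into `tensorRank T` nonzero
rank-1 terms coincide up to permutation of the rank-1 terms. -/
def CPDUnique {F : Type*} [CommRing F] {I J K : ℕ} (T : Fin I → Fin J → Fin K → F) : Prop :=
  ∀ (a a' : Fin (tensorRank T) → Fin I → F) (b b' : Fin (tensorRank T) → Fin J → F)
    (c c' : Fin (tensorRank T) → Fin K → F),
    IsPD T (tensorRank T) a b c → IsPD T (tensorRank T) a' b' c' →
    ∃ σ : Equiv.Perm (Fin (tensorRank T)),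
      ∀ r i j k, a r i * b r j * c r k = a' (σ r) i * b' (σ r) j * c' (σ r) k

/-- The CPD of an `I×J×K` tensor of rank `R` is generically unique over `F`:
the set of triples `(A,B,C)` for which the CPD of `[A,B,C]_R` is not unique has
Lebesgue measure zero. -/
def CPDGenericallyUnique (F : Type*) [CommRing F] [MeasureSpace F] (I J K R : ℕ) : Prop :=
  volume {p : (Fin I → Fin R → F) × (Fin J → Fin R → F) × (Fin K → Fin R → F) |
    ¬ CPDUnique (cpdSum p.1 p.2.1 p.2.2)} = 0
open MeasureTheory

noncomputable section

/-- The SFS-tensor `[A,A,C]_R` with entries `t_{ijk} = Σ_r A i r * A j r * C k r`. -/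
def sfsSum {F : Type*} [CommRing F] {I K R : ℕ}
    (A : Fin I → Fin R → F) (C : Fin K → Fin R → F) :
    Fin I → Fin I → Fin K → F :=
  fun i j k => ∑ r : Fin R, A i r * A j r * C k r

/-- `T` is the sum of the `R` SFS rank-1 terms `a_r ∘ a_r ∘ c_r` with all vectors nonzero. -/
def IsSfsPD {F : Type*} [CommRing F] {I K : ℕ} (T : Fin I → Fin I → Fin K → F) (R : ℕ)
    (a : Fin R → Fin I → F) (c : Fin R → Fin K → F) : Prop :=
  (∀ r, a r ≠ 0) ∧ (∀ r, c r ≠ 0) ∧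
    ∀ i j k, T i j k = ∑ r : Fin R, a r i * a r j * c r k

/-- The SFS-rank of an SFS-tensor: the minimal number of SFS rank-1 terms. -/
def sfsRank {F : Type*} [CommRing F] {I K : ℕ} (T : Fin I → Fin I → Fin K → F) : ℕ :=
  sInf {R | ∃ a c, IsSfsPD T R a c}

/-- The SFS-CPD of `T` is unique: any two decompositions of `T` into `sfsRank T`
SFS rank-1 terms coincide up to permutation of the SFS rank-1 terms. -/
def SfsCPDUnique {F : Type*} [CommRing F] {I K : ℕ} (T : Fin I → Fin I → Fin K → F) : Prop :=
  ∀ (a a' : Fin (sfsRank T) → Fin I → F) (c c' : Fin (sfsRank T) → Fin K → F),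
    IsSfsPD T (sfsRank T) a c → IsSfsPD T (sfsRank T) a' c' →
    ∃ σ : Equiv.Perm (Fin (sfsRank T)),
      ∀ r i j k, a r i * a r j * c r k = a' (σ r) i * a' (σ r) j * c' (σ r) k

/-- The SFS-CPD of an `I×I×K` SFS-tensor of SFS-rank `R` is generically unique over `F`:
the set of pairs `(A,C)` for which the SFS-CPD of `[A,A,C]_R` is not unique has
Lebesgue measure zero. -/
def SFSGenericallyUnique (F : Type*) [CommRing F] [MeasureSpace F] (I K R : ℕ) : Prop :=
  volume {p : (Fin I → Fin R → F) × (Fin K → Fin R → F) |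
    ¬ SfsCPDUnique (sfsSum p.1 p.2)} = 0
open scoped Matrix

/-- The number `ω(λ)` of nonzero entries of a vector. -/
def omegaCount {F : Type*} [Zero F] {R : ℕ} (lam : Fin R → F) : ℕ :=
  Nat.card {r : Fin R // lam r ≠ 0}

/-- The k-rank of a matrix `A`: the largest `k ≤ R` such that every `k` columns of `A`
are linearly independent. -/
def kRank {F : Type*} [Field F] {I R : ℕ} (A : Matrix (Fin I) (Fin R) F) : ℕ :=
  sSup {k | k ≤ R ∧ ∀ s : Finset (Fin R), s.card = k →
    LinearIndependent F (fun r : {x // x ∈ s} => fun i => A i r.1)}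

/-- Condition `(U_m)` for a pair `(A,B)`: whenever
`rank(A·Diag(λ)·Bᵀ) ≤ m−1`, one has `ω(λ) ≤ m−1`. -/
def CondU {F : Type*} [Field F] {I J R : ℕ} (m : ℕ)
    (A : Matrix (Fin I) (Fin R) F) (B : Matrix (Fin J) (Fin R) F) : Prop :=
  ∀ lam : Fin R → F,
    (A * Matrix.diagonal lam * Bᵀ).rank ≤ m - 1 → omegaCount lam ≤ m - 1

/-- Condition `(W_m)` for a triplet `(A,B,C)`: whenever `λ ∈ range(Cᵀ)` and
`rank(A·Diag(λ)·Bᵀ) ≤ m−1`, one has `ω(λ) ≤ m−1`. -/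
def CondW {F : Type*} [Field F] {I J K R : ℕ} (m : ℕ)
    (A : Matrix (Fin I) (Fin R) F) (B : Matrix (Fin J) (Fin R) F)
    (C : Matrix (Fin K) (Fin R) F) : Prop :=
  ∀ lam : Fin R → F, (∃ x : Fin K → F, lam = Cᵀ.mulVec x) →
    (A * Matrix.diagonal lam * Bᵀ).rank ≤ m - 1 → omegaCount lam ≤ m - 1

/-- The Khatri–Rao (columnwise Kronecker) product `A ⊙ B`. -/
def khatriRao {F : Type*} [CommRing F] {I J R : ℕ}
    (A : Matrix (Fin I) (Fin R) F) (B : Matrix (Fin J) (Fin R) F) :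
    Matrix (Fin I × Fin J) (Fin R) F :=
  fun p r => A p.1 r * B p.2 r

/-! ### Kruskal's permutation lemma -/

/-- The number of members of the family `v` that lie in the subspace `L`. -/
def countIn {F V : Type*} [Field F] [AddCommGroup V] [Module F V] {n : ℕ}
    (v : Fin n → V) (L : Submodule F V) : ℕ :=
  Nat.card {r : Fin n // v r ∈ L}

section Flats

variable {F V : Type*} [Field F] [AddCommGroup V] [Module F V]

open scoped Classical in
lemma countIn_eq {n : ℕ} (v : Fin n → V) (L : Submodule F V) :
    countIn v L = (Finset.univ.filter fun r => v r ∈ L).card := by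
  rw [countIn, Nat.card_eq_fintype_card, Fintype.card_subtype]

lemma countIn_le {n : ℕ} (v : Fin n → V) (L : Submodule F V) : countIn v L ≤ n := by
  classical
  rw [countIn_eq]
  exact (Finset.card_le_univ _).trans (by simp)

/-- A vector of a cover `M` of `L` that lies outside `L` generates `M` over `L`. -/
lemma sup_span_eq_of_covBy {L M : Submodule F V} (h : L ⋖ M) {w : V} (hw : w ∉ L) :
    L ⊔ F ∙ w = M ↔ w ∈ M := by
  constructor
  · rintro rfl
    exact Submodule.mem_sup_right (Submodule.mem_span_singleton_self w)
  · intro hM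
    have h1 : L < L ⊔ F ∙ w := (Submodule.covBy_span_singleton_sup hw).lt.trans_eq (sup_comm _ _)
    have h2 : L ⊔ F ∙ w ≤ M := sup_le h.le ((Submodule.span_singleton_le_iff_mem _ _).2 hM)
    exact (h.eq_or_eq h1.le h2).resolve_left h1.ne'

open scoped Classical in
/-- Distinct covers of `L` overlap only in `L`, so the members of `v` outside `L` are counted
once each. -/
lemma sum_countIn_covers {n : ℕ} (v : Fin n → V) (L : Submodule F V)
    (S : Finset (Submodule F V)) (hS : ∀ M ∈ S, L ⋖ M) :
    ∑ M ∈ S, countIn v M = S.card * countIn v L +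
      (Finset.univ.filter fun r => v r ∉ L ∧ L ⊔ F ∙ v r ∈ S).card := by
  have key : ∀ M ∈ S, countIn v M = countIn v L +
      ((Finset.univ.filter fun r => v r ∉ L).filter fun r => L ⊔ F ∙ v r = M).card := by
    intro M hM
    rw [countIn_eq, countIn_eq, ← Finset.card_union_of_disjoint]
    · congr 1
      ext r
      by_cases hr : v r ∈ L
      · simp [hr, (hS M hM).le hr]
      · simp [hr, sup_span_eq_of_covBy (hS M hM) hr]
    · rw [Finset.disjoint_left]
      intro r hr hr'
      simp only [Finset.mem_filter, Finset.mem_univ, true_and] at hr hr'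
      exact hr'.1 hr
  rw [Finset.sum_congr rfl key, Finset.sum_add_distrib, Finset.sum_const, smul_eq_mul,
    Finset.sum_card_fiberwise_eq_card_filter, Finset.filter_filter]

/-- If every hyperplane containing at least `rank b - 1` members of `b` contains at least `R - R'`
more members of `a` than of `b`, then so does every subspace spanned by members of `b`.
Downward induction: sum the inequality over the covers `L ⊔ span {b s}` of `L`. -/
lemma countIn_flat_le [FiniteDimensional F V] {R R' : ℕ} (a : Fin R → V) (b : Fin R' → V)
    (hspan : ∀ r, a r ∈ Submodule.span F (Set.range b))
    (h : ∀ x : V →ₗ[F] F,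
      Module.finrank F (Submodule.span F (Set.range b)) ≤ countIn b (LinearMap.ker x) + 1 →
      countIn b (LinearMap.ker x) + R ≤ countIn a (LinearMap.ker x) + R')
    (L : Submodule F V) (hL : Submodule.span F {w | ∃ s, b s = w ∧ w ∈ L} = L) :
    countIn b L + R ≤ countIn a L + R' := by
  classical
  induction L using WellFoundedGT.induction with
  | ind L ih =>
  set S : Finset (Submodule F V) :=
    (Finset.univ.filter fun s => b s ∉ L).image fun s => L ⊔ F ∙ b s with hSdef
  have hcov : ∀ M ∈ S, L ⋖ M := by
    intro M hM
    simp only [hSdef, Finset.mem_image, Finset.mem_filter, Finset.mem_univ, true_and] at hM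
    obtain ⟨s, hs, rfl⟩ := hM
    rw [sup_comm]
    exact Submodule.covBy_span_singleton_sup hs
  have hflat : ∀ M ∈ S, Submodule.span F {w | ∃ s, b s = w ∧ w ∈ M} = M := by
    intro M hM
    have hc := hcov M hM
    simp only [hSdef, Finset.mem_image, Finset.mem_filter, Finset.mem_univ, true_and] at hM
    obtain ⟨s, hs, hMs⟩ := hM
    refine le_antisymm (Submodule.span_le.2 fun w ⟨_, _, hw⟩ => hw) ?_
    conv_lhs => rw [← hMs]
    refine sup_le ?_ ?_
    · conv_lhs => rw [← hL]
      exact Submodule.span_mono fun w ⟨s, hs, hw⟩ => ⟨s, hs, hc.le hw⟩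
    · rw [Submodule.span_singleton_le_iff_mem]
      exact Submodule.subset_span ⟨s, rfl, (sup_span_eq_of_covBy hc hs).1 hMs⟩
  rcases Nat.lt_or_ge 1 S.card with h2 | h1
  · have hsum : ∑ M ∈ S, (countIn b M + R) ≤ ∑ M ∈ S, (countIn a M + R') :=
      Finset.sum_le_sum fun M hM => ih M (hcov M hM).lt (hflat M hM)
    rw [Finset.sum_add_distrib, Finset.sum_add_distrib, sum_countIn_covers _ _ _ hcov,
      sum_countIn_covers _ _ _ hcov, Finset.sum_const, Finset.sum_const, smul_eq_mul,
      smul_eq_mul] at hsum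
    have hb : (Finset.univ.filter fun s => b s ∉ L ∧ L ⊔ F ∙ b s ∈ S).card + countIn b L
        = R' := by
      have : (Finset.univ.filter fun s => b s ∉ L ∧ L ⊔ F ∙ b s ∈ S)
          = Finset.univ.filter fun s => ¬ b s ∈ L := by
        ext s
        simp only [Finset.mem_filter, Finset.mem_univ, true_and, and_iff_left_iff_imp]
        intro hs
        exact Finset.mem_image_of_mem _ (by simpa using hs)
      rw [this, countIn_eq, add_comm, Finset.card_filter_add_card_filter_not]
      simp
    have ha : (Finset.univ.filter fun r => a r ∉ L ∧ L ⊔ F ∙ a r ∈ S).card + countIn a L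
        ≤ R := by
      have : (Finset.univ.filter fun s => a s ∉ L ∧ L ⊔ F ∙ a s ∈ S).card
          ≤ (Finset.univ.filter fun s => ¬ a s ∈ L).card :=
        Finset.card_le_card fun s hs => by
          simp only [Finset.mem_filter, Finset.mem_univ, true_and] at hs ⊢
          exact hs.1
      have h3 := Finset.card_filter_add_card_filter_not (s := Finset.univ) (fun r => a r ∈ L)
      rw [Finset.card_univ, Fintype.card_fin] at h3
      rw [countIn_eq]
      omega
    obtain ⟨N, hN⟩ : ∃ N, S.card = N + 2 := ⟨S.card - 2, by omega⟩
    rw [hN] at hsum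
    by_contra hlt
    push Not at hlt
    nlinarith
  · by_cases hall : ∀ s, b s ∈ L
    · have hb : Submodule.span F (Set.range b) ≤ L :=
        Submodule.span_le.2 (by rintro _ ⟨s, rfl⟩; exact hall s)
      have ha : countIn a L = R := by
        rw [countIn_eq, Finset.filter_true_of_mem fun r _ => hb (hspan r)]
        simp
      have := countIn_le b L
      omega
    · push Not at hall
      obtain ⟨s₀, hs₀⟩ := hall
      -- `L` is a hyperplane of the span of `b`, hence cut out there by one functional.
      have hmem : ∀ s, b s ∉ L → L ⊔ F ∙ b s ∈ S := fun s hs =>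
        Finset.mem_image_of_mem (fun s => L ⊔ F ∙ b s) (by simpa using hs)
      have hle : Submodule.span F (Set.range b) ≤ L ⊔ F ∙ b s₀ := by
        rw [Submodule.span_le]
        rintro _ ⟨s, rfl⟩
        by_cases hs : b s ∈ L
        · exact Submodule.mem_sup_left hs
        · rw [← Finset.card_le_one.1 h1 _ (hmem s hs) _ (hmem s₀ hs₀)]
          exact Submodule.mem_sup_right (Submodule.mem_span_singleton_self _)
      obtain ⟨x, hx, hLx⟩ := Submodule.exists_le_ker_of_notMem hs₀
      have hiff : ∀ w ∈ Submodule.span F (Set.range b), (w ∈ LinearMap.ker x ↔ w ∈ L) := by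
        intro w hw
        refine ⟨fun hwx => ?_, fun hwL => hLx hwL⟩
        obtain ⟨l, hl, c, hc, rfl⟩ := Submodule.mem_sup.1 (hle hw)
        obtain ⟨t, rfl⟩ := Submodule.mem_span_singleton.1 hc
        have hlx : x l = 0 := hLx hl
        have : t = 0 := by simpa [hlx, hx] using hwx
        simpa [this] using hl
      have hbx : countIn b (LinearMap.ker x) = countIn b L := by
        rw [countIn_eq, countIn_eq]
        congr 1
        ext s
        simpa using hiff _ (Submodule.subset_span ⟨s, rfl⟩)
      have hax : countIn a (LinearMap.ker x) = countIn a L := by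
        rw [countIn_eq, countIn_eq]
        congr 1
        ext s
        simpa using hiff _ (hspan s)
      have hrank : Module.finrank F L ≤ countIn b L := by
        have hset : {w | ∃ s, b s = w ∧ w ∈ L}
            = Set.range fun s : {s : Fin R' // b s ∈ L} => b s.1 := by
          ext w
          constructor
          · rintro ⟨s, rfl, hs⟩
            exact ⟨⟨s, hs⟩, rfl⟩
          · rintro ⟨s, rfl⟩
            exact ⟨s.1, rfl, s.2⟩
        rw [countIn, Nat.card_eq_fintype_card]
        conv_lhs => rw [← hL, hset]
        exact finrank_range_le_card _
      have h3 := Submodule.finrank_mono hle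
      have h4 := Submodule.finrank_add_le_finrank_add_finrank L (F ∙ b s₀)
      have h5 : Module.finrank F (F ∙ b s₀) ≤ 1 := by
        simpa using finrank_span_le_card (R := F) ({b s₀} : Set V)
      have := h x (by omega)
      omega

/-- Kruskal's permutation lemma. If the members of `a` are pairwise nonproportional, then the
hyperplane condition forces `b` to be a rescaled reordering of `a`. -/
lemma permutation_lemma [FiniteDimensional F V] {R R' : ℕ} (a : Fin R → V) (b : Fin R' → V)
    (hR : R' ≤ R) (hR0 : 0 < R) (ha0 : ∀ r, a r ≠ 0) (hb0 : ∀ s, b s ≠ 0)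
    (hprop : ∀ (w : V) (r r' : Fin R), a r ∈ F ∙ w → a r' ∈ F ∙ w → r = r')
    (hspan : ∀ r, a r ∈ Submodule.span F (Set.range b))
    (h : ∀ x : V →ₗ[F] F,
      Module.finrank F (Submodule.span F (Set.range b)) ≤ countIn b (LinearMap.ker x) + 1 →
      countIn b (LinearMap.ker x) + R ≤ countIn a (LinearMap.ker x) + R') :
    R' = R ∧ ∃ σ : Fin R' → Fin R, Function.Injective σ ∧
      ∀ s, ∃ t : F, t ≠ 0 ∧ b s = t • a (σ s) := by
  classical
  have hne : 0 < R' := by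
    rcases Nat.eq_zero_or_pos R' with rfl | h0
    · exact absurd (hspan ⟨0, hR0⟩) (by simpa using ha0 ⟨0, hR0⟩)
    · exact h0
  have hline : ∀ s, countIn b (F ∙ b s) + R ≤ countIn a (F ∙ b s) + R' := by
    intro s
    apply countIn_flat_le a b hspan h
    refine le_antisymm (Submodule.span_le.2 fun w ⟨_, _, hw⟩ => hw) ?_
    rw [Submodule.span_singleton_le_iff_mem]
    exact Submodule.subset_span ⟨s, rfl, Submodule.mem_span_singleton_self _⟩
  have ha1 : ∀ s, countIn a (F ∙ b s) ≤ 1 := by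
    intro s
    rw [countIn_eq, Finset.card_le_one]
    intro r hr r' hr'
    simp only [Finset.mem_filter, Finset.mem_univ, true_and] at hr hr'
    exact hprop _ r r' hr hr'
  have hb1 : ∀ s, 1 ≤ countIn b (F ∙ b s) := by
    intro s
    rw [countIn_eq, Nat.one_le_iff_ne_zero, Finset.card_ne_zero]
    exact ⟨s, by simp⟩
  have hRR : R' = R := by
    have h1 := hline ⟨0, hne⟩
    have h2 := ha1 ⟨0, hne⟩
    have h3 := hb1 ⟨0, hne⟩
    omega
  have hex : ∀ s, ∃ r, a r ∈ F ∙ b s := by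
    intro s
    have h1 := hline s
    have h3 := hb1 s
    have h4 : 0 < countIn a (F ∙ b s) := by omega
    rw [countIn_eq, Finset.card_pos] at h4
    obtain ⟨r, hr⟩ := h4
    exact ⟨r, by simpa using hr⟩
  choose σ hσ using hex
  have hscale : ∀ s, ∃ t : F, t ≠ 0 ∧ b s = t • a (σ s) := by
    intro s
    obtain ⟨t, ht⟩ := Submodule.mem_span_singleton.1 (hσ s)
    have ht0 : t ≠ 0 := by
      rintro rfl
      exact ha0 (σ s) (by simpa using ht.symm)
    exact ⟨t⁻¹, inv_ne_zero ht0, by rw [← ht, smul_smul, inv_mul_cancel₀ ht0, one_smul]⟩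
  refine ⟨hRR, σ, ?_, hscale⟩
  intro s s' hss
  have hbin : countIn b (F ∙ b s) ≤ 1 := by
    have h1 := hline s
    have h2 := ha1 s
    omega
  rw [countIn_eq, Finset.card_le_one] at hbin
  refine hbin s (by simp) s' ?_
  obtain ⟨t, -, ht⟩ := hscale s'
  simp only [Finset.mem_filter, Finset.mem_univ, true_and]
  rw [ht, ← hss]
  exact Submodule.smul_mem _ _ (hσ s)

end Flats

/-! ### Consequences of the k-rank and of condition `(U_m)` -/

section Matrices

variable {F : Type*} [Field F] {I J K R : ℕ}

lemma kRank_spec (A : Matrix (Fin I) (Fin R) F) :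
    kRank A ≤ R ∧ ∀ s : Finset (Fin R), s.card = kRank A →
      LinearIndependent F (fun r : {x // x ∈ s} => fun i => A i r.1) := by
  have hmem : kRank A ∈ {k | k ≤ R ∧ ∀ s : Finset (Fin R), s.card = k →
      LinearIndependent F (fun r : {x // x ∈ s} => fun i => A i r.1)} := by
    refine Nat.sSup_mem ⟨0, Nat.zero_le _, fun s hs => ?_⟩ ⟨R, fun k hk => hk.1⟩
    rw [Finset.card_eq_zero] at hs
    subst hs
    exact linearIndependent_empty_type
  exact hmem

/-- Any column of `A` is separated by a functional from fewer than `k_A` other columns. -/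
lemma exists_functional_of_kRank (A : Matrix (Fin I) (Fin R) F) (r : Fin R)
    (s : Finset (Fin R)) (hr : r ∉ s) (hs : s.card + 1 ≤ kRank A) :
    ∃ x : (Fin I → F) →ₗ[F] F, x (A.col r) ≠ 0 ∧ ∀ r' ∈ s, x (A.col r') = 0 := by
  classical
  obtain ⟨hk, hli⟩ := kRank_spec A
  obtain ⟨u, hu, hcard⟩ := Finset.exists_superset_card_eq (s := insert r s) (n := kRank A)
    (by rw [Finset.card_insert_of_notMem hr]; exact hs) (by simpa using hk)
  have h1 : LinearIndepOn F A.col (u : Set (Fin R)) := hli u hcard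
  have h2 : LinearIndepOn F A.col (insert r (s : Set (Fin R))) :=
    h1.mono (by rw [← Finset.coe_insert]; exact_mod_cast hu)
  have h3 := h2.notMem_span_of_insert (by simpa using hr)
  obtain ⟨x, hx, hle⟩ := Submodule.exists_le_ker_of_notMem h3
  exact ⟨x, hx, fun r' hr' => hle (Submodule.subset_span ⟨r', hr', rfl⟩)⟩

lemma eq_of_proportional (A : Matrix (Fin I) (Fin R) F) (hA : ∀ r, A.col r ≠ 0)
    (hk : 2 ≤ kRank A) (w : Fin I → F) (r r' : Fin R)
    (hr : A.col r ∈ F ∙ w) (hr' : A.col r' ∈ F ∙ w) : r = r' := by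
  by_contra hne
  obtain ⟨x, hx, hx'⟩ := exists_functional_of_kRank A r {r'} (by simpa using hne) (by simpa)
  have hx' := hx' r' (by simp)
  obtain ⟨t, ht⟩ := Submodule.mem_span_singleton.1 hr
  obtain ⟨t', ht'⟩ := Submodule.mem_span_singleton.1 hr'
  have ht0 : t' ≠ 0 := by
    rintro rfl
    exact hA r' (by simpa using ht'.symm)
  rw [← ht', map_smul, smul_eq_mul] at hx'
  have : x w = 0 := (mul_eq_zero.1 hx').resolve_left ht0
  exact hx (by rw [← ht, map_smul, this, smul_zero])

/-- Full column rank of `A ⊙ A` when `2 k_A > R`: the columns other than `r` split into two sets of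
fewer than `k_A` columns, and a functional in each mode kills one of the two sets. -/
lemma khatriRao_self_injective (A : Matrix (Fin I) (Fin R) F) (hk : R + 1 ≤ 2 * kRank A)
    (mu : Fin R → F) (h : ∀ i j, ∑ r, A i r * A j r * mu r = 0) (r : Fin R) : mu r = 0 := by
  classical
  have hR : ((Finset.univ : Finset (Fin R)).erase r).card = R - 1 := by
    rw [Finset.card_erase_of_mem (Finset.mem_univ r), Finset.card_univ, Fintype.card_fin]
  have hr := r.2
  obtain ⟨hkR, -⟩ := kRank_spec A
  obtain ⟨s, hs, hcard⟩ := Finset.exists_subset_card_eq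
    (s := (Finset.univ : Finset (Fin R)).erase r) (n := kRank A - 1) (by omega)
  obtain ⟨x, hx, hx0⟩ := exists_functional_of_kRank A r s
    (fun h => by simpa using hs h) (by omega)
  obtain ⟨y, hy, hy0⟩ := exists_functional_of_kRank A r (Finset.univ.erase r \ s)
    (by simp) (by rw [Finset.card_sdiff_of_subset hs]; omega)
  have hsum : ∑ r', x (A.col r') * y (A.col r') * mu r' = 0 := by
    have e : ∀ (z : (Fin I → F) →ₗ[F] F) r', z (A.col r')
        = ∑ i, A i r' * z (fun j => if i = j then 1 else 0) := fun z r' => by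
      rw [LinearMap.pi_apply_eq_sum_univ z]
      simp [Matrix.col_apply]
    calc ∑ r', x (A.col r') * y (A.col r') * mu r'
        = ∑ r', ∑ i, ∑ j, (x (fun l => if i = l then 1 else 0) *
            y (fun l => if j = l then 1 else 0)) * (A i r' * A j r' * mu r') := by
          refine Finset.sum_congr rfl fun r' _ => ?_
          rw [e x, e y, Finset.sum_mul_sum, Finset.sum_mul]
          refine Finset.sum_congr rfl fun i _ => ?_
          rw [Finset.sum_mul]
          exact Finset.sum_congr rfl fun j _ => by ring
      _ = ∑ i, ∑ j, (x (fun l => if i = l then 1 else 0) *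
            y (fun l => if j = l then 1 else 0)) * ∑ r', A i r' * A j r' * mu r' := by
          rw [Finset.sum_comm]
          refine Finset.sum_congr rfl fun i _ => ?_
          rw [Finset.sum_comm]
          exact Finset.sum_congr rfl fun j _ => by rw [Finset.mul_sum]
      _ = 0 := by simp [h]
  rw [Finset.sum_eq_single r] at hsum
  · simpa [hx, hy] using hsum
  · intro r' _ hne
    by_cases hr' : r' ∈ s
    · simp [hx0 r' hr']
    · simp [hy0 r' (by simp [hne, hr'])]
  · simp

lemma rank_mul_diagonal_mul_le (B : Matrix (Fin J) (Fin R) F) (C : Matrix (Fin K) (Fin R) F)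
    (mu : Fin R → F) : (B * Matrix.diagonal mu * Cᵀ).rank ≤ omegaCount mu := by
  classical
  refine (Matrix.rank_mul_le_left _ _).trans ((Matrix.rank_mul_le_right _ _).trans ?_)
  rw [Matrix.rank_diagonal, omegaCount, Nat.card_eq_fintype_card]

lemma matrix_rank_add_le (M N : Matrix (Fin J) (Fin K) F) : (M + N).rank ≤ M.rank + N.rank := by
  rw [Matrix.rank, Matrix.rank, Matrix.rank, Matrix.mulVecLin_add]
  exact (Submodule.finrank_mono (LinearMap.range_add_le _ _)).trans
    (Submodule.finrank_add_le_finrank_add_finrank _ _)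

/-- Condition `(U_m)` implies `(U_{p+1})` for all `p < m ≤ R`: turning a zero entry of `λ` into a
nonzero one raises the rank by at most one. -/
lemma CondU.le {m : ℕ} {A : Matrix (Fin I) (Fin R) F} {C : Matrix (Fin K) (Fin R) F}
    (h : CondU m A C) (hm : m ≤ R) (d : ℕ) : ∀ (p : ℕ), p + d + 1 = m → ∀ (lam : Fin R → F),
    (A * Matrix.diagonal lam * Cᵀ).rank ≤ p → omegaCount lam ≤ p := by
  classical
  have hω : ∀ lam : Fin R → F, omegaCount lam = (Finset.univ.filter fun r => lam r ≠ 0).card :=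
    fun lam => by rw [omegaCount, Nat.card_eq_fintype_card, Fintype.card_subtype]
  induction d with
  | zero =>
    intro p hp lam hl
    have := h lam (by omega)
    omega
  | succ d ih =>
    intro p hp lam hl
    have hle := ih (p + 1) (by omega) lam (by omega)
    by_contra hlt
    have hex : ∃ r, lam r = 0 := by
      by_contra hno
      push Not at hno
      rw [hω, Finset.filter_true_of_mem fun r _ => hno r] at hle
      simp at hle
      omega
    obtain ⟨r, hr⟩ := hex
    have hrank : (A * Matrix.diagonal (lam + Pi.single r 1) * Cᵀ).rank ≤ p + 1 := by
      have hsplit : A * Matrix.diagonal (lam + Pi.single r 1) * Cᵀ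
          = A * Matrix.diagonal lam * Cᵀ
            + A * Matrix.diagonal (Pi.single r 1 : Fin R → F) * Cᵀ := by
        rw [← Matrix.add_mul, ← Matrix.mul_add, Matrix.diagonal_add]
        rfl
      rw [hsplit]
      refine (matrix_rank_add_le _ _).trans (Nat.add_le_add hl ?_)
      refine (rank_mul_diagonal_mul_le _ _ _).trans ?_
      rw [hω, Finset.card_le_one]
      intro s hs s' hs'
      simp only [Finset.mem_filter, Finset.mem_univ, true_and, Pi.single_apply, ne_eq,
        ite_eq_right_iff, one_ne_zero, imp_false, not_not] at hs hs'
      rw [hs, hs']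
    have h1 := ih (p + 1) (by omega) _ hrank
    have h2 : omegaCount (lam + Pi.single r 1) = omegaCount lam + 1 := by
      rw [hω, hω, ← Finset.card_insert_of_notMem (a := r) (by simpa using hr)]
      congr 1
      ext s
      by_cases hs : s = r
      · subst hs
        simp [hr]
      · simp [hs]
    omega

lemma omegaCount_add_countIn {V : Type*} [AddCommGroup V] [Module F V] {n : ℕ} (v : Fin n → V)
    (x : V →ₗ[F] F) : omegaCount (fun r => x (v r)) + countIn v (LinearMap.ker x) = n := by
  classical
  rw [countIn_eq, omegaCount, Nat.card_eq_fintype_card, Fintype.card_subtype, add_comm]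
  simp only [LinearMap.mem_ker]
  rw [Finset.card_filter_add_card_filter_not]
  simp

/-- Uniqueness of the first factor: contracting the first mode with a functional `x` and comparing
ranks turns `(U_m)` into the hyperplane condition of the permutation lemma. -/
lemma first_factor_unique {R' : ℕ} (A : Matrix (Fin I) (Fin R) F) (C : Matrix (Fin K) (Fin R) F)
    (hA : ∀ r, A.col r ≠ 0) (hk : 2 ≤ kRank A) (hU : CondU (R - A.rank + 2) A C)
    (hR : R' ≤ R) (a b : Fin R' → Fin I → F) (c : Fin R' → Fin K → F)
    (hpd : IsPD (sfsSum A C) R' a b c) :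
    R' = R ∧ ∃ σ : Fin R' → Fin R, Function.Injective σ ∧
      ∀ s, ∃ t : F, t ≠ 0 ∧ a s = t • A.col (σ s) := by
  classical
  obtain ⟨ha0, -, -, hT⟩ := hpd
  obtain ⟨hkR, hli⟩ := kRank_spec A
  have hrkR : A.rank ≤ R := by simpa using A.rank_le_width
  have hrank2 : 2 ≤ A.rank := by
    obtain ⟨s, -, hs⟩ := Finset.exists_subset_card_eq
      (s := (Finset.univ : Finset (Fin R))) (n := kRank A) (by simpa using hkR)
    have h1 := finrank_span_eq_card (hli s hs)
    have h2 : Submodule.span F (Set.range fun r : {x // x ∈ s} => fun i => A i r.1)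
        ≤ Submodule.span F (Set.range A.col) := by
      apply Submodule.span_mono
      rintro _ ⟨r, rfl⟩
      exact ⟨r.1, rfl⟩
    rw [Matrix.rank_eq_finrank_span_cols]
    have h3 := Submodule.finrank_mono h2
    simp at h1
    omega
  have hcontr : ∀ x : (Fin I → F) →ₗ[F] F,
      A * Matrix.diagonal (fun r => x (A.col r)) * Cᵀ
        = (Matrix.of fun j s => b s j) * Matrix.diagonal (fun s => x (a s))
          * (Matrix.of fun k s => c s k)ᵀ := by
    intro x
    ext j k
    have hv : ∑ r, (A j r * C k r) • A.col r = ∑ s, (b s j * c s k) • a s := by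
      ext i
      have := hT i j k
      simp only [sfsSum] at this
      simp only [Finset.sum_apply, Pi.smul_apply, smul_eq_mul, Matrix.col_apply]
      calc _ = ∑ r, A i r * A j r * C k r := Finset.sum_congr rfl fun r _ => by ring
        _ = _ := this
        _ = _ := Finset.sum_congr rfl fun r _ => by ring
    have hx := congrArg x hv
    simp only [map_sum, map_smul, smul_eq_mul] at hx
    rw [Matrix.mul_apply, Matrix.mul_apply]
    simp only [Matrix.mul_diagonal, Matrix.transpose_apply, Matrix.of_apply]
    calc _ = ∑ r, A j r * C k r * x (A.col r) := Finset.sum_congr rfl fun r _ => by ring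
      _ = _ := hx
      _ = _ := Finset.sum_congr rfl fun r _ => by ring
  have hω : ∀ x : (Fin I → F) →ₗ[F] F, omegaCount (fun s => x (a s)) ≤ R - A.rank + 1 →
      omegaCount (fun r => x (A.col r)) ≤ omegaCount (fun s => x (a s)) := by
    intro x hx
    refine hU.le (by omega) (R - A.rank + 1 - omegaCount (fun s => x (a s))) _ (by omega) _ ?_
    rw [hcontr]
    exact rank_mul_diagonal_mul_le _ _ _
  have hspan : ∀ r, A.col r ∈ Submodule.span F (Set.range a) := by
    intro r
    by_contra hr
    obtain ⟨x, hx, hle⟩ := Submodule.exists_le_ker_of_notMem hr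
    have h0 : omegaCount (fun s => x (a s)) = 0 := by
      have h1 := omegaCount_add_countIn a x
      have h2 : countIn a (LinearMap.ker x) = R' := by
        rw [countIn_eq, Finset.filter_true_of_mem fun s _ => hle (Submodule.subset_span ⟨s, rfl⟩)]
        simp
      omega
    have h1 := hω x (by omega)
    rw [h0, Nat.le_zero, omegaCount, Finite.card_eq_zero_iff] at h1
    exact h1.elim ⟨r, hx⟩
  refine permutation_lemma A.col a hR (by omega) hA ha0 (eq_of_proportional A hA hk) hspan ?_
  intro x hx
  have h1 := omegaCount_add_countIn a x
  have h2 := omegaCount_add_countIn A.col x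
  have h3 : A.rank ≤ Module.finrank F (Submodule.span F (Set.range a)) := by
    rw [Matrix.rank_eq_finrank_span_cols]
    refine Submodule.finrank_mono (Submodule.span_le.2 ?_)
    rintro _ ⟨r, rfl⟩
    exact hspan r
  have h4 := hω x (by omega)
  omega

/-- Every SFS decomposition with `R` terms has the same terms as `[A,A,C]_R`: the first factor is
determined up to scaling and order, and full column rank of `A ⊙ A` determines the last one. -/
lemma sfs_terms_unique (A : Matrix (Fin I) (Fin R) F) (C : Matrix (Fin K) (Fin R) F)
    (hA : ∀ r, A.col r ≠ 0) (hk : 2 ≤ kRank A) (hk' : R + 1 ≤ 2 * kRank A)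
    (hU : CondU (R - A.rank + 2) A C) (a : Fin R → Fin I → F) (c : Fin R → Fin K → F)
    (hpd : IsSfsPD (sfsSum A C) R a c) :
    ∃ σ : Equiv.Perm (Fin R), ∀ r i j k,
      a r i * a r j * c r k = A i (σ r) * A j (σ r) * C k (σ r) := by
  obtain ⟨ha, hc, hT⟩ := hpd
  obtain ⟨-, σ, hinj, hσ⟩ := first_factor_unique A C hA hk hU le_rfl a a c ⟨ha, ha, hc, hT⟩
  choose t ht0 ht using hσ
  set e : Equiv.Perm (Fin R) := Equiv.ofBijective σ (Finite.injective_iff_bijective.1 hinj) with he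
  have he' : ∀ r, e r = σ r := fun r => rfl
  have hterm : ∀ r i, a r i = t r * A i (e r) := fun r i => by rw [ht r]; rfl
  have hC : ∀ k r, t r ^ 2 * c r k - C k (e r) = 0 := by
    intro k r
    have := khatriRao_self_injective A hk'
      (fun s => t (e.symm s) ^ 2 * c (e.symm s) k - C k s) (fun i j => ?_) (e r)
    · simpa using this
    · have h1 := hT i j k
      simp only [sfsSum] at h1
      simp only [mul_sub, Finset.sum_sub_distrib]
      rw [sub_eq_zero, h1, ← Equiv.sum_comp e]
      refine Finset.sum_congr rfl fun r _ => ?_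
      rw [Equiv.symm_apply_apply, hterm, hterm]
      ring
  refine ⟨e, fun r i j k => ?_⟩
  rw [hterm, hterm, ← sub_eq_zero.1 (hC k r)]
  ring

end Matrices

/-- Deterministic `(U_{m_A})`-based uniqueness condition for the
SFS-CPD. -/
theorem statement7 {F : Type*} [RCLike F] {I K R : ℕ}
    (A : Matrix (Fin I) (Fin R) F) (C : Matrix (Fin K) (Fin R) F)
    (hA : ∀ r, (fun i => A i r) ≠ 0) (hC : ∀ r, (fun k => C k r) ≠ 0)
    (h1 : R + 1 ≤
      max (min (kRank A) (kRank C - 1)) (min (kRank A - 1) (kRank C)) + kRank A)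
    (h2 : CondU (R - A.rank + 2) A C) :
    tensorRank (sfsSum A C) = R ∧ SfsCPDUnique (sfsSum A C) := by
  have hkA : R + 1 ≤ 2 * kRank A := by omega
  have hk2 : 2 ≤ kRank A := by
    -- `k_C ≤ R` excludes `R = 1`.
    have hAR := (kRank_spec A).1
    have hCR := (kRank_spec C).1
    omega
  have hpd : IsSfsPD (sfsSum A C) R (fun r i => A i r) (fun r k => C k r) :=
    ⟨hA, hC, fun _ _ _ => rfl⟩
  have hmin : ∀ R' a b c, IsPD (sfsSum A C) R' a b c → R ≤ R' := by
    intro R' a b c h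
    by_contra hlt
    have := (first_factor_unique A C hA hk2 h2 (by omega) a b c h).1
    omega
  have hrank : tensorRank (sfsSum A C) = R := by
    have hmem : R ∈ {R' | ∃ a b c, IsPD (sfsSum A C) R' a b c} :=
      ⟨_, _, _, hpd.1, hpd.1, hpd.2.1, hpd.2.2⟩
    refine le_antisymm (Nat.sInf_le hmem) ?_
    obtain ⟨a, b, c, h⟩ := Nat.sInf_mem ⟨R, hmem⟩
    exact hmin _ a b c h
  have hsrank : sfsRank (sfsSum A C) = R := by
    have hmem : R ∈ {R' | ∃ a c, IsSfsPD (sfsSum A C) R' a c} := ⟨_, _, hpd⟩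
    refine le_antisymm (Nat.sInf_le hmem) ?_
    obtain ⟨a, c, h⟩ := Nat.sInf_mem ⟨R, hmem⟩
    exact hmin _ a a c ⟨h.1, h.1, h.2.1, h.2.2⟩
  refine ⟨hrank, ?_⟩
  unfold SfsCPDUnique
  rw [hsrank]
  intro a a' c c' h h'
  obtain ⟨σ, hσ⟩ := sfs_terms_unique A C hA hk2 hkA h2 a c h
  obtain ⟨τ, hτ⟩ := sfs_terms_unique A C hA hk2 hkA h2 a' c' h'
  refine ⟨σ.trans τ.symm, fun r i j k => ?_⟩
  rw [hσ, hτ]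
  simp
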